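/- arXiv:1410.1212 — 8 statements merged into one kernel-verified Lean document; each statement's English description precedes it below -/
import Mathlib

section
/- For all natural numbers n, m and every natural number k with 0 ≤ k ≤ m, one has p(n, m) ≥ p(n, k) + p(n, m − k), where the inequality is taken in the integers. -/
/-- The base-2 sum-of-digits function of degree `n`: the sum of the binary
digits of `m` at positions `≥ n`, i.e. the binary digit sum of `⌊m / 2^n⌋`. -/
def s (n m : ℕ) : ℕ := (Nat.digits 2 (m / 2 ^ n)).sum

/-- `p(n, m) = 2m - 2^(n+2) + 4 - s(n, m)`, as an integer. -/
def p (n m : ℕ) : ℤ := 2 * (m : ℤ) - 2 ^ (n + 2) + 4 - (s n m : ℤ)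

/-!
Legendre's formula `(b - 1) * ∑ i ≥ 1, ⌊x / b ^ i⌋ = x - (digit sum of x)` and the superadditivity
of the floor make base-`b` digit sums subadditive. Adding `k` and `j` before discarding the last
`n` binary digits produces at most one extra carry `c`, and none at all if `n = 0`; both cases are
captured by `c < 2 ^ n`. Hence `s(n, k + j) ≤ s(n, k) + s(n, j) + (2 ^ n - 1)`, and the constant
`-4 * (2 ^ n - 1)`, which `p(n, k) + p(n, j)` contains once more than `p(n, k + j)`, absorbs the
error.
-/

theorem sum_range_log_div_pow_add_le (b x y : ℕ) :
    ∑ i ∈ Finset.range (Nat.log b x).succ, x / b ^ i.succ +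
        ∑ i ∈ Finset.range (Nat.log b y).succ, y / b ^ i.succ ≤
      ∑ i ∈ Finset.range (Nat.log b (x + y)).succ, (x + y) / b ^ i.succ := by
  have range_log_subset {z : ℕ} (hz : z ≤ x + y) :
      Finset.range (Nat.log b z).succ ⊆ Finset.range (Nat.log b (x + y)).succ :=
    Finset.range_mono (Nat.succ_le_succ (Nat.log_mono_right hz))
  calc
    _ ≤ ∑ i ∈ Finset.range (Nat.log b (x + y)).succ, x / b ^ i.succ +
          ∑ i ∈ Finset.range (Nat.log b (x + y)).succ, y / b ^ i.succ :=
      add_le_add (Finset.sum_le_sum_of_subset (range_log_subset (Nat.le_add_right x y)))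
        (Finset.sum_le_sum_of_subset (range_log_subset (Nat.le_add_left y x)))
    _ = ∑ i ∈ Finset.range (Nat.log b (x + y)).succ, (x / b ^ i.succ + y / b ^ i.succ) :=
      Finset.sum_add_distrib.symm
    _ ≤ _ := Finset.sum_le_sum fun _ _ ↦ Nat.div_add_div_le_add_div

theorem sum_digits_add_le (b x y : ℕ) :
    (b.digits (x + y)).sum ≤ (b.digits x).sum + (b.digits y).sum := by
  have sub_sum_digits_superadditive :
      (x - (b.digits x).sum) + (y - (b.digits y).sum) ≤ x + y - (b.digits (x + y)).sum := by
    simp only [← Nat.sub_one_mul_sum_log_div_pow_eq_sub_sum_digits, ← mul_add]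
    exact Nat.mul_le_mul_left _ (sum_range_log_div_pow_add_le b x y)
  have := Nat.digit_sum_le b x
  have := Nat.digit_sum_le b y
  have := Nat.digit_sum_le b (x + y)
  omega

theorem exists_lt_add_div_eq (x y : ℕ) {d : ℕ} (hd : 0 < d) :
    ∃ c < d, (x + y) / d = x / d + y / d + c := by
  refine ⟨_, ?_, Nat.add_div hd⟩
  have := Nat.mod_lt x hd
  have := Nat.mod_lt y hd
  split_ifs <;> omega

theorem sum_digits_add_div_lt (b x y : ℕ) {d : ℕ} (hd : 0 < d) :
    (b.digits ((x + y) / d)).sum < (b.digits (x / d)).sum + (b.digits (y / d)).sum + d := by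
  obtain ⟨c, hc, add_div_eq⟩ := exists_lt_add_div_eq x y hd
  calc
    (b.digits ((x + y) / d)).sum
      ≤ (b.digits (x / d + y / d)).sum + (b.digits c).sum :=
        add_div_eq ▸ sum_digits_add_le b _ _
    _ ≤ (b.digits (x / d)).sum + (b.digits (y / d)).sum + c :=
        add_le_add (sum_digits_add_le b _ _) (Nat.digit_sum_le b c)
    _ < (b.digits (x / d)).sum + (b.digits (y / d)).sum + d := Nat.add_lt_add_left hc _

theorem s_add_lt (n k j : ℕ) : s n (k + j) < s n k + s n j + 2 ^ n :=
  sum_digits_add_div_lt 2 k j (Nat.two_pow_pos n)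

/-- For all `n, m ∈ ℕ` and every `k` with `0 ≤ k ≤ m`,
`p(n, m) ≥ p(n, k) + p(n, m - k)`. -/
theorem p_superadditive (n m k : ℕ) (hk : k ≤ m) :
    p n m ≥ p n k + p n (m - k) := by
  obtain ⟨j, rfl⟩ := Nat.exists_eq_add_of_le hk
  have s_add_lt_cast : (s n (k + j) : ℤ) < s n k + s n j + 2 ^ n := mod_cast s_add_lt n k j
  have one_le_two_pow : (1 : ℤ) ≤ 2 ^ n := one_le_pow₀ one_le_two
  simp only [p, Nat.add_sub_cancel_left, Nat.cast_add, pow_add]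
  linarith
end

section
/- For all natural numbers n and m with m ≥ 2^{n+1} − 1, one has p(n, m) − 1 ≥ p(0, m − 2^{n+1} + 1), where the inequality is taken in the integers. -/
/-!
Put `k = m + 1 - 2 ^ (n + 1)`. The linear terms of `p` cancel, and the claim becomes
`s n m ≤ s 0 k + 1`. Adding `2 ^ (n + 1) - 1` to `k` raises the quotient by `2 ^ n` by `1` or by
`2`, depending on the carry. Both `1` and `2` have binary digit sum `1`, so subadditivity of digit
sums gives `s n m ≤ s n k + 1`, and dropping the lowest `n` digits of `k` does not increase
their sum.
-/

theorem sum_digits_eq_mod_add_sum_digits_div (b a : ℕ) :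
    (b.digits a).sum = a % b + (b.digits (a / b)).sum := by
  obtain rfl | rfl | hb : b = 0 ∨ b = 1 ∨ 1 < b := by omega
  · cases a <;> simp
  · simp [Nat.mod_one]
  · rcases a.eq_zero_or_pos with rfl | ha
    · simp
    · rw [Nat.digits_def' hb ha, List.sum_cons]

theorem sum_digits_succ_le (b a : ℕ) : (b.digits (a + 1)).sum ≤ (b.digits a).sum + 1 := by
  induction a using Nat.strong_induction_on with
  | _ a ih =>
    rcases a.eq_zero_or_pos with rfl | ha
    · simpa using Nat.digit_sum_le b 1
    obtain rfl | rfl | hb : b = 0 ∨ b = 1 ∨ 1 < b := by omega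
    · cases a <;> simp
    · simp
    rw [sum_digits_eq_mod_add_sum_digits_div b (a + 1), sum_digits_eq_mod_add_sum_digits_div b a,
      Nat.succ_div]
    split_ifs with hdvd
    · have ih_div := ih (a / b) (Nat.div_lt_self ha hb)
      rw [Nat.mod_eq_zero_of_dvd hdvd]
      omega
    · have hmod : (a + 1) % b ≤ a % b + 1 := by
        simpa using Nat.mod_le (a % b + 1) b
      rw [add_zero]
      omega

theorem sum_digits_div_pow_le (b n a : ℕ) : (b.digits (a / b ^ n)).sum ≤ (b.digits a).sum := by
  induction n with
  | zero => simp
  | succ n ih =>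
    rw [pow_succ, ← Nat.div_div_eq_div_mul]
    exact (Nat.le_add_left _ _).trans
      ((sum_digits_eq_mod_add_sum_digits_div b (a / b ^ n)).symm.trans_le ih)

theorem s_le_s_zero (n k : ℕ) : s n k ≤ s 0 k := by
  simpa only [s, pow_zero, Nat.div_one] using sum_digits_div_pow_le 2 n k

theorem s_add_two_pow_succ_sub_one_le (n k : ℕ) : s n (k + (2 ^ (n + 1) - 1)) ≤ s n k + 1 := by
  have hpos : 0 < 2 ^ n := by positivity
  have hquot : (2 ^ (n + 1) - 1) / 2 ^ n = 1 := by
    rw [Nat.div_eq_iff hpos]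
    omega
  rw [s, s, Nat.add_div hpos, hquot]
  split_ifs
  · have hsum_two : (Nat.digits 2 2).sum = 1 := by norm_num
    exact (sum_digits_add_le 2 (k / 2 ^ n) 2).trans_eq (by rw [hsum_two])
  · exact sum_digits_succ_le 2 (k / 2 ^ n)

/-- For all `n, m ∈ ℕ` with `m ≥ 2^(n+1) - 1`,
`p(n, m) - 1 ≥ p(0, m - 2^(n+1) + 1)`. -/
theorem p_shift (n m : ℕ) (hm : 2 ^ (n + 1) - 1 ≤ m) :
    p n m - 1 ≥ p 0 (m + 1 - 2 ^ (n + 1)) := by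
  obtain ⟨k, rfl⟩ := Nat.exists_eq_add_of_le' hm
  have hpow : 1 ≤ 2 ^ (n + 1) := Nat.one_le_two_pow
  have hk : k + (2 ^ (n + 1) - 1) + 1 - 2 ^ (n + 1) = k := by omega
  have hs : (s n (k + (2 ^ (n + 1) - 1)) : ℤ) ≤ s 0 k + 1 := by
    exact_mod_cast (s_add_two_pow_succ_sub_one_le n k).trans
      (Nat.add_le_add_right (s_le_s_zero n k) 1)
  rw [hk, p, p]
  push_cast [hpow]
  rw [pow_succ 2 (n + 1)]
  linarith
end

section
/- (Ahmed–Nguyen.) Let n ∈ ℕ and let m be a positive integer with 2^{n+1} − 1 ≤ m ≤ 2^{n+2} − 3. Then for every p ∈ ℕ, β(n, m) = β(n + p, m + 2^{n+1}·(2^p − 1)) = −(1/2)·β(0, m − 2^{n+1} + 1). -/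
/-!
Write `m = 2 ^ (n + 1) - 1 + j`. For `j ≤ 2 ^ (n + 1) - 2` the index `m` lies in the vanishing range
of level `n + 1`, and it is too small to be a sum of two indices that are each at least
`2 ^ (n + 1) - 1`, so the convolution in the recursion is empty. Only the multiple of `β 0 j`
survives. Replacing `n` by `n + p` and `m` by `m + 2 ^ (n + 1) * (2 ^ p - 1)` leaves `j` unchanged.
-/

/-- Doubly indexed families `β` satisfying the Ewing–Schober backward recursion, with values in a
ring and an arbitrary element `c` in the role of the factor `1 / 2`. As `2 ^ (n + 1) - 1 ≤ m` in
`recursion`, the truncated difference `m + 1 - 2 ^ (n + 1)` is the true one. -/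
structure IsBackwardRecursive {R : Type*} [NonUnitalNonAssocRing R] (c : R) (β : ℕ → ℕ → R) :
    Prop where
  eq_zero : ∀ n m, 1 ≤ m → m ≤ 2 ^ (n + 1) - 2 → β n m = 0
  recursion : ∀ n m, 2 ^ (n + 1) - 1 ≤ m →
    β n m = c * (β (n + 1) m
      - ∑ k ∈ Finset.Icc (2 ^ (n + 1) - 1) (m + 1 - 2 ^ (n + 1)), β n k * β n (m - k)
      - β 0 (m + 1 - 2 ^ (n + 1)))

theorem IsBackwardRecursive.apply_two_pow_sub_one_add {R : Type*} [NonUnitalNonAssocRing R] {c : R}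
    {β : ℕ → ℕ → R} (hβ : IsBackwardRecursive c β) {n j : ℕ} (hj : j ≤ 2 ^ (n + 1) - 2) :
    β n (2 ^ (n + 1) - 1 + j) = -c * β 0 j := by
  have two_le : 2 ≤ 2 ^ (n + 1) := Nat.le_self_pow n.succ_ne_zero 2
  have next_level : β (n + 1) (2 ^ (n + 1) - 1 + j) = 0 :=
    hβ.eq_zero (n + 1) _ (by omega) (by rw [pow_succ 2 (n + 1)]; omega)
  have index_eq : 2 ^ (n + 1) - 1 + j + 1 - 2 ^ (n + 1) = j := by omega
  have no_convolution : Finset.Icc (2 ^ (n + 1) - 1) j = ∅ := Finset.Icc_eq_empty (by omega)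
  rw [hβ.recursion n _ (Nat.le_add_right _ _), next_level, index_eq, no_convolution,
    Finset.sum_empty, sub_zero, zero_sub, mul_neg, neg_mul]

theorem two_pow_sub_one_add_shift (n j p : ℕ) :
    2 ^ (n + 1) - 1 + j + 2 ^ (n + 1) * (2 ^ p - 1) = 2 ^ (n + p + 1) - 1 + j := by
  have one_le : 1 ≤ 2 ^ (n + 1) := Nat.one_le_two_pow
  have pow_le : 2 ^ (n + 1) ≤ 2 ^ (n + p + 1) := Nat.pow_le_pow_right two_pos (by omega)
  rw [Nat.mul_sub_one, ← pow_add, Nat.add_right_comm n 1 p]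
  omega

theorem beta_shift_general {R : Type*} [NonUnitalNonAssocRing R] {c : R} {β : ℕ → ℕ → R}
    (hβ : IsBackwardRecursive c β) {n m : ℕ} (hm1 : 2 ^ (n + 1) - 1 ≤ m)
    (hm2 : m ≤ 2 ^ (n + 2) - 3) (p : ℕ) :
    β n m = β (n + p) (m + 2 ^ (n + 1) * (2 ^ p - 1)) ∧
    β n m = -c * β 0 (m + 1 - 2 ^ (n + 1)) := by
  obtain ⟨j, rfl⟩ := Nat.exists_eq_add_of_le hm1
  have one_le : 1 ≤ 2 ^ (n + 1) := Nat.one_le_two_pow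
  have index_eq : 2 ^ (n + 1) - 1 + j + 1 - 2 ^ (n + 1) = j := by omega
  have hj : j ≤ 2 ^ (n + 1) - 2 := by rw [pow_succ 2 (n + 1)] at hm2; omega
  have hj' : j ≤ 2 ^ (n + p + 1) - 2 :=
    hj.trans (Nat.sub_le_sub_right (Nat.pow_le_pow_right two_pos (by omega)) 2)
  rw [two_pow_sub_one_add_shift, index_eq, hβ.apply_two_pow_sub_one_add hj,
    hβ.apply_two_pow_sub_one_add hj']
  exact ⟨rfl, rfl⟩

open Finset in
/-- (Ahmed–Nguyen) For `β` satisfying the Ewing–Schober backward recursion,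
`n ∈ ℕ` and a positive integer `m` with `2^(n+1) - 1 ≤ m ≤ 2^(n+2) - 3`,
for every `p ∈ ℕ`:
`β(n, m) = β(n + p, m + 2^(n+1)·(2^p - 1)) = -(1/2)·β(0, m - 2^(n+1) + 1)`. -/
theorem beta_shift (β : ℕ → ℕ → ℚ)
    (hβ0 : ∀ n, β n 0 = 1)
    (hβzero : ∀ n m, 1 ≤ m → m ≤ 2 ^ (n + 1) - 2 → β n m = 0)
    (hβrec : ∀ n m, 2 ^ (n + 1) - 1 ≤ m →
      β n m = (1 / 2) * (β (n + 1) m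
        - ∑ k ∈ Icc (2 ^ (n + 1) - 1) (m + 1 - 2 ^ (n + 1)), β n k * β n (m - k)
        - β 0 (m + 1 - 2 ^ (n + 1))))
    (n m : ℕ) (hm0 : 0 < m)
    (hm1 : 2 ^ (n + 1) - 1 ≤ m) (hm2 : m ≤ 2 ^ (n + 2) - 3) (p : ℕ) :
    β n m = β (n + p) (m + 2 ^ (n + 1) * (2 ^ p - 1)) ∧
    β n m = -(1 / 2) * β 0 (m + 1 - 2 ^ (n + 1)) :=
  beta_shift_general ⟨hβzero, hβrec⟩ hm1 hm2 p
end

section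
/- Let n be a positive integer and let m be a positive integer with 2^{n+1} ≤ m ≤ 2^{n+2} − 3. Then 2^{2m + 2 − 2^{n+2}}·β(n, m) is an integer. -/
/-!
Write `N = 2 ^ (n + 1)` and suppose that `β(i, k)` has denominator exponent at most
`2k + 3 - 2 ^ (i + 2)` for the terms on the right-hand side of the recursion
`2 β(n, m) = β(n + 1, m) - ∑ β(n, k) β(n, m - k) - β(0, m + 1 - N)`. These terms then have exponents
at most `2m + 3 - 4N`, `2m + 6 - 4N` and `max(2m + 1 - 2N, 0)`. As `N ≥ 2`, none exceeds
`2m + 2 - 2N`, so the bound propagates by induction on `m` and downwards on `n` for fixed `m`. When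
`N ≥ 4` and `m ≥ N` none exceeds even `2m + 1 - 2N`, which saves the additional factor `2`.
-/

section TwoPowIntegral

variable {R : Type*} [Ring R] {d e : ℕ} {x y : R}

variable (R) in
/-- The additive group of the elements of `R` whose denominator divides `2 ^ e`, that is, which
become integers after multiplication by `2 ^ e`. Being a subgroup, it handles the sums and
differences in the recursion. -/
def twoPowIntegral (e : ℕ) : AddSubgroup R :=
  (Int.castAddHom R).range.comap (AddMonoidHom.mulLeft (2 ^ e))

theorem mem_twoPowIntegral : x ∈ twoPowIntegral R e ↔ ∃ z : ℤ, 2 ^ e * x = z := by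
  simp only [twoPowIntegral, AddSubgroup.mem_comap, AddMonoidHom.mem_range,
    AddMonoidHom.coe_mulLeft, Int.coe_castAddHom, eq_comm]

theorem one_mem_twoPowIntegral (e : ℕ) : (1 : R) ∈ twoPowIntegral R e :=
  mem_twoPowIntegral.2 ⟨2 ^ e, by simp⟩

theorem twoPowIntegral_mono : Monotone (twoPowIntegral R) := by
  intro d e hde x hx
  obtain ⟨z, hz⟩ := mem_twoPowIntegral.1 hx
  refine mem_twoPowIntegral.2 ⟨2 ^ (e - d) * z, ?_⟩
  rw [← Nat.sub_add_cancel hde, pow_add, mul_assoc, hz]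
  simp

theorem mul_mem_twoPowIntegral (hx : x ∈ twoPowIntegral R d) (hy : y ∈ twoPowIntegral R e) :
    x * y ∈ twoPowIntegral R (d + e) := by
  obtain ⟨z, hz⟩ := mem_twoPowIntegral.1 hx
  obtain ⟨w, hw⟩ := mem_twoPowIntegral.1 hy
  refine mem_twoPowIntegral.2 ⟨z * w, ?_⟩
  have hcomm : Commute ((2 : R) ^ e) x := (Commute.ofNat_left 2 x).pow_left e
  rw [pow_add, hcomm.mul_mul_mul_comm, hz, hw, Int.cast_mul]

theorem two_mul_mem_twoPowIntegral :
    2 * x ∈ twoPowIntegral R e ↔ x ∈ twoPowIntegral R (e + 1) := by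
  simp only [mem_twoPowIntegral, pow_succ, mul_assoc]

end TwoPowIntegral

/-- The Ewing–Schober backward recursion for the Faber coefficients of the Mandelbrot set, cleared
of its division by `2` so that it makes sense in every ring. The truncated subtraction in
`m + 1 - 2 ^ (n + 1)` is exact, because `2 ^ (n + 1) - 1 ≤ m`. -/
structure IsFaberCoeff {R : Type*} [Ring R] (β : ℕ → ℕ → R) : Prop where
  apply_zero (n : ℕ) : β n 0 = 1
  eq_zero (n m : ℕ) : 1 ≤ m → m ≤ 2 ^ (n + 1) - 2 → β n m = 0
  two_mul_eq (n m : ℕ) : 2 ^ (n + 1) - 1 ≤ m →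
    2 * β n m = β (n + 1) m
      - ∑ k ∈ Finset.Icc (2 ^ (n + 1) - 1) (m + 1 - 2 ^ (n + 1)), β n k * β n (m - k)
      - β 0 (m + 1 - 2 ^ (n + 1))

namespace IsFaberCoeff

variable {R : Type*} [Ring R] {β : ℕ → ℕ → R} {n m e : ℕ}

theorem mem_twoPowIntegral_of_lt (hβ : IsFaberCoeff β) (hm : m < 2 ^ (n + 1) - 1) (e : ℕ) :
    β n m ∈ twoPowIntegral R e := by
  rcases m.eq_zero_or_pos with rfl | hpos
  · rw [hβ.apply_zero]
    exact one_mem_twoPowIntegral e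
  · rw [hβ.eq_zero n m hpos (by lia)]
    exact zero_mem _

/-- The last two hypotheses compare `e` with the exponents coming from `β 0 (m + 1 - 2 ^ (n + 1))`
and from the products `β n k * β n (m - k)`; the exponent of `β (n + 1) m` is never larger. -/
theorem mem_twoPowIntegral_succ (hβ : IsFaberCoeff β) (hm : 2 ^ (n + 1) - 1 ≤ m)
    (hnext : β (n + 1) m ∈ twoPowIntegral R (2 * m + 3 - 2 ^ (n + 3)))
    (hlt : ∀ i, ∀ k < m, β i k ∈ twoPowIntegral R (2 * k + 3 - 2 ^ (i + 2)))
    (he : 2 * m + 1 - 2 ^ (n + 2) ≤ e) (he' : 2 * m + 6 - 2 ^ (n + 3) ≤ e) :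
    β n m ∈ twoPowIntegral R (e + 1) := by
  have hpos : 0 < 2 ^ n := by positivity
  rw [← two_mul_mem_twoPowIntegral, hβ.two_mul_eq n m hm]
  refine sub_mem (sub_mem ?next (sum_mem fun k hk ↦ ?product)) ?first
  case next => exact twoPowIntegral_mono (by lia) hnext
  case product =>
    rw [Finset.mem_Icc] at hk
    exact twoPowIntegral_mono (by lia) <|
      mul_mem_twoPowIntegral (hlt n k (by lia)) (hlt n (m - k) (by lia))
  case first => exact twoPowIntegral_mono (by lia) (hlt 0 (m + 1 - 2 ^ (n + 1)) (by lia))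

/-- Where the subtraction truncates, `β n m` is `0` or `1`. -/
theorem mem_twoPowIntegral (hβ : IsFaberCoeff β) (n m : ℕ) :
    β n m ∈ twoPowIntegral R (2 * m + 3 - 2 ^ (n + 2)) := by
  rcases lt_or_ge m (2 ^ (n + 1) - 1) with hm | hm
  · exact hβ.mem_twoPowIntegral_of_lt hm _
  · have hn : n < 2 ^ n := Nat.lt_two_pow_self
    have hexp : 2 * m + 3 - 2 ^ (n + 2) = 2 * m + 2 - 2 ^ (n + 2) + 1 := by lia
    rw [hexp]
    exact hβ.mem_twoPowIntegral_succ hm (hβ.mem_twoPowIntegral (n + 1) m)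
      (fun i k _ ↦ hβ.mem_twoPowIntegral i k) (by lia) (by lia)
termination_by (m, m - n)

end IsFaberCoeff

theorem two_pow_beta_int_general {R : Type*} [Ring R] {β : ℕ → ℕ → R} (hβ : IsFaberCoeff β)
    {n m : ℕ} (hn : 0 < n) (hm : 2 ^ (n + 1) ≤ m) :
    ∃ z : ℤ, 2 ^ (2 * m + 2 - 2 ^ (n + 2)) * β n m = z := by
  have hpow : 2 ≤ 2 ^ n := Nat.le_self_pow hn.ne' 2
  have hexp : 2 * m + 2 - 2 ^ (n + 2) = 2 * m + 1 - 2 ^ (n + 2) + 1 := by lia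
  rw [← mem_twoPowIntegral, hexp]
  exact hβ.mem_twoPowIntegral_succ (by lia) (hβ.mem_twoPowIntegral (n + 1) m)
    (fun i k _ ↦ hβ.mem_twoPowIntegral i k) le_rfl (by lia)

open Finset in
/-- For `β` satisfying the Ewing–Schober backward recursion, a positive
integer `n` and `2^(n+1) ≤ m ≤ 2^(n+2) - 3`, the rational
`2^(2m + 2 - 2^(n+2))·β(n, m)` is an integer. -/
theorem two_pow_beta_int (β : ℕ → ℕ → ℚ)
    (hβ0 : ∀ n, β n 0 = 1)
    (hβzero : ∀ n m, 1 ≤ m → m ≤ 2 ^ (n + 1) - 2 → β n m = 0)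
    (hβrec : ∀ n m, 2 ^ (n + 1) - 1 ≤ m →
      β n m = (1 / 2) * (β (n + 1) m
        - ∑ k ∈ Icc (2 ^ (n + 1) - 1) (m + 1 - 2 ^ (n + 1)), β n k * β n (m - k)
        - β 0 (m + 1 - 2 ^ (n + 1))))
    (n m : ℕ) (hn : 0 < n)
    (hm1 : 2 ^ (n + 1) ≤ m) (hm2 : m ≤ 2 ^ (n + 2) - 3) :
    ∃ z : ℤ, (2 : ℚ) ^ (2 * m + 2 - 2 ^ (n + 2)) * β n m = (z : ℚ) :=
  two_pow_beta_int_general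
    ⟨hβ0, hβzero, fun n m hm ↦ by rw [hβrec n m hm]; ring⟩ hn hm1
end

section
/- For every natural number n, β(n, 2^{n+2} − 2) = −(1/2)·(β(0, 2^{n+1} − 1) + 1/4). -/
/-!
For `2 ^ (n + 1) - 1 ≤ m ≤ 2 ^ (n + 2) - 2` the term `β (n + 1) m` of the recursion vanishes, so
only the convolution sum and `β 0 (m + 1 - 2 ^ (n + 1))` contribute. The sum is empty except at the
right end `m = 2 ^ (n + 2) - 2`, where it is the single square `β n (2 ^ (n + 1) - 1) ^ 2`; and at
the left end the recursion gives `β n (2 ^ (n + 1) - 1) = -1 / 2`.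
-/

/-- The backward recursion for the coefficients of the Faber polynomial expansions
`p_n(ψ(z)) = ∑ β n m * z ^ (2 ^ n - m)`, over any ring in which `2` is invertible. The index
`m - 2 ^ (n + 1) + 1` is written `m + 1 - 2 ^ (n + 1)` so that the subtraction is not truncated. -/
structure IsFaberCoeff_s14 {R : Type*} [Ring R] [Invertible (2 : R)] (β : ℕ → ℕ → R) : Prop where
  apply_zero_right : ∀ n, β n 0 = 1
  apply_eq_zero : ∀ n m, 1 ≤ m → m ≤ 2 ^ (n + 1) - 2 → β n m = 0
  backward_recursion : ∀ n m, 2 ^ (n + 1) - 1 ≤ m →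
    β n m = ⅟2 * (β (n + 1) m
      - ∑ k ∈ Finset.Icc (2 ^ (n + 1) - 1) (m + 1 - 2 ^ (n + 1)), β n k * β n (m - k)
      - β 0 (m + 1 - 2 ^ (n + 1)))

namespace IsFaberCoeff_s14

variable {R : Type*} [Ring R] [Invertible (2 : R)] {β : ℕ → ℕ → R} {n m : ℕ}

theorem apply_eq_neg_invOf_two_mul_sum_add (hβ : IsFaberCoeff_s14 β) (hm : 2 ^ (n + 1) - 1 ≤ m)
    (hm' : m ≤ 2 ^ (n + 2) - 2) :
    β n m = -⅟2 *
      (∑ k ∈ Finset.Icc (2 ^ (n + 1) - 1) (m + 1 - 2 ^ (n + 1)), β n k * β n (m - k)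
        + β 0 (m + 1 - 2 ^ (n + 1))) := by
  have two_pow_pos : 0 < 2 ^ n := Nat.two_pow_pos n
  have next_eq_zero : β (n + 1) m = 0 := hβ.apply_eq_zero _ _ (by lia) hm'
  rw [hβ.backward_recursion n m hm, next_eq_zero]
  noncomm_ring

theorem apply_eq_neg_invOf_two_mul (hβ : IsFaberCoeff_s14 β) (hm : 2 ^ (n + 1) - 1 ≤ m)
    (hm' : m < 2 ^ (n + 2) - 2) :
    β n m = -⅟2 * β 0 (m + 1 - 2 ^ (n + 1)) := by
  rw [hβ.apply_eq_neg_invOf_two_mul_sum_add hm hm'.le, Finset.Icc_eq_empty (by lia),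
    Finset.sum_empty, zero_add]

theorem apply_two_pow_sub_one (hβ : IsFaberCoeff_s14 β) (n : ℕ) :
    β n (2 ^ (n + 1) - 1) = -⅟2 := by
  have two_pow_pos : 0 < 2 ^ n := Nat.two_pow_pos n
  have index_eq_zero : 2 ^ (n + 1) - 1 + 1 - 2 ^ (n + 1) = 0 := by lia
  rw [hβ.apply_eq_neg_invOf_two_mul le_rfl (by lia), index_eq_zero, hβ.apply_zero_right, mul_one]

end IsFaberCoeff_s14

theorem beta_special_one_general {R : Type*} [Ring R] [Invertible (2 : R)] {β : ℕ → ℕ → R}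
    (hβ : IsFaberCoeff_s14 β) (n : ℕ) :
    β n (2 ^ (n + 2) - 2) = -⅟2 * (β 0 (2 ^ (n + 1) - 1) + ⅟2 ^ 2) := by
  have two_pow_pos : 0 < 2 ^ n := Nat.two_pow_pos n
  have upper_index : 2 ^ (n + 2) - 2 + 1 - 2 ^ (n + 1) = 2 ^ (n + 1) - 1 := by lia
  have cofactor_index : 2 ^ (n + 2) - 2 - (2 ^ (n + 1) - 1) = 2 ^ (n + 1) - 1 := by lia
  rw [hβ.apply_eq_neg_invOf_two_mul_sum_add (by lia) le_rfl, upper_index, Finset.Icc_self,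
    Finset.sum_singleton, cofactor_index, ← sq, hβ.apply_two_pow_sub_one n, neg_sq, add_comm]

open Finset in
/-- For `β` satisfying the Ewing–Schober backward recursion and every `n ∈ ℕ`,
`β(n, 2^(n+2) - 2) = -(1/2)·(β(0, 2^(n+1) - 1) + 1/4)`. -/
theorem beta_special_one (β : ℕ → ℕ → ℚ)
    (hβ0 : ∀ n, β n 0 = 1)
    (hβzero : ∀ n m, 1 ≤ m → m ≤ 2 ^ (n + 1) - 2 → β n m = 0)
    (hβrec : ∀ n m, 2 ^ (n + 1) - 1 ≤ m →
      β n m = (1 / 2) * (β (n + 1) m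
        - ∑ k ∈ Icc (2 ^ (n + 1) - 1) (m + 1 - 2 ^ (n + 1)), β n k * β n (m - k)
        - β 0 (m + 1 - 2 ^ (n + 1)))) (n : ℕ) :
    β n (2 ^ (n + 2) - 2) = -(1 / 2) * (β 0 (2 ^ (n + 1) - 1) + 1 / 4) := by
  have hβ : IsFaberCoeff_s14 β := ⟨hβ0, hβzero, by simpa only [invOf_eq_inv, one_div] using hβrec⟩
  rw [beta_special_one_general hβ n, invOf_eq_inv]
  norm_num
end

section
/- For every positive integer n, β(n, 2^{n+2}) = 1/16. -/
/-!
Put `F n = ∑ m, β n m X ^ m` and `f = F 0`. The backward recursion says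
`F (n + 1) = F n ^ 2 + X ^ (2 ^ (n + 1) - 1) * f`, so `F n` is a form `P (X, f)` of degree
`d = 2 ^ n`. With `w = f / X`, the Laurent series `X ^ (-d - 2) * (X f' - f) * P (X, f)` equals
`w' * P (1, w)`, the derivative of a polynomial in `w`, and so has no residue: the coefficient of
`X ^ (d + 1)` in `(X f' - f) * F n` vanishes. Since `F n ≡ 1` up to `X ^ (2 ^ (n + 1) - 2)`, for
`n ≥ 2` that coefficient is `2 ^ n * β 0 (2 ^ n + 1)`, which gives Jungreis's vanishing theorem.
Given this, a single use of the recursion expresses `β n (2 ^ (n + 2))` through values just past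
the gap of zeros, and these are read off from `β 0 0`, `β 0 1` and `β 0 2`.
-/

open Finset PowerSeries
open scoped Pointwise

theorem exists_pow_mul_pow_eq_of_mem_pair_pow {M : Type*} [CommMonoid M] {x y z : M} {d : ℕ}
    (hz : z ∈ ({x, y} : Set M) ^ d) : ∃ a b, a + b = d ∧ x ^ a * y ^ b = z := by
  induction d generalizing z with
  | zero => exact ⟨0, 0, rfl, by simpa using hz.symm⟩
  | succ d ih =>
    rw [pow_succ] at hz
    obtain ⟨w, hw, v, rfl | rfl, rfl⟩ := hz <;> obtain ⟨a, b, rfl, rfl⟩ := ih hw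
    · exact ⟨a + 1, b, by omega, by simp only [pow_succ, mul_right_comm]⟩
    · exact ⟨a, b + 1, by omega, by simp only [pow_succ, mul_assoc]⟩

section Forms

variable {R : Type*} [CommSemiring R]

/-- The power series `P (X, f)`, where `P` runs over the binary forms of degree `d` over `R`,
encoded as the `d`-th power of the `R`-span of `X` and `f`. -/
noncomputable def binaryForms (f : R⟦X⟧) (d : ℕ) : Submodule R R⟦X⟧ :=
  Submodule.span R {X, f} ^ d

theorem mul_mem_binaryForms {f g h : R⟦X⟧} {d e : ℕ} (hg : g ∈ binaryForms f d)
    (hh : h ∈ binaryForms f e) : g * h ∈ binaryForms f (d + e) := by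
  rw [binaryForms, pow_add]
  exact Submodule.mul_mem_mul hg hh

theorem X_pow_mem_binaryForms (f : R⟦X⟧) (d : ℕ) : X ^ d ∈ binaryForms f d :=
  Submodule.pow_mem_pow _ (Submodule.subset_span (by simp)) d

theorem self_mem_binaryForms_one (f : R⟦X⟧) : f ∈ binaryForms f 1 := by
  rw [binaryForms, pow_one]
  exact Submodule.subset_span (by simp)

theorem coeff_pow_mul_derivative [IsAddTorsionFree R] (f : R⟦X⟧) (b : ℕ) :
    coeff b (f ^ b * d⁄dX R f) = coeff (b + 1) (f ^ (b + 1)) := by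
  have hderiv := congrArg (coeff b) (derivative_pow f (b + 1))
  rw [coeff_derivative, Nat.add_sub_cancel, mul_assoc, ← nsmul_eq_mul, map_nsmul] at hderiv
  refine nsmul_right_injective b.succ_ne_zero ?_
  simp only [← hderiv, nsmul_eq_mul]
  push_cast
  ring

variable {S : Type*} [CommRing S]

theorem coeff_X_mul_derivative_sub_self_mul_X_pow_mul_pow [IsAddTorsionFree S] (f : S⟦X⟧)
    (a b : ℕ) :
    coeff (a + b + 1) ((X * d⁄dX S f - f) * (X ^ a * f ^ b)) = 0 := by
  have hfactor : (X * d⁄dX S f - f) * (X ^ a * f ^ b)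
      = X ^ a * (X * (f ^ b * d⁄dX S f) - f ^ (b + 1)) := by ring
  rw [hfactor, show a + b + 1 = b + 1 + a by ring, coeff_X_pow_mul, map_sub, coeff_succ_X_mul,
    coeff_pow_mul_derivative, sub_self]

theorem coeff_X_mul_derivative_sub_self_mul_of_mem_binaryForms [IsAddTorsionFree S]
    {f g : S⟦X⟧} {d : ℕ} (hg : g ∈ binaryForms f d) :
    coeff (d + 1) ((X * d⁄dX S f - f) * g) = 0 := by
  rw [binaryForms, Submodule.span_pow] at hg
  induction hg using Submodule.span_induction with
  | mem g hg =>
    obtain ⟨a, b, rfl, rfl⟩ := exists_pow_mul_pow_eq_of_mem_pair_pow hg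
    exact coeff_X_mul_derivative_sub_self_mul_X_pow_mul_pow f a b
  | zero => rw [mul_zero, map_zero]
  | add g h _ _ hg hh => rw [mul_add, map_add, hg, hh, add_zero]
  | smul r g _ hg => rw [mul_smul_comm, coeff_smul, hg, smul_zero]

theorem coeff_X_mul_derivative_sub_self (f : S⟦X⟧) (m : ℕ) :
    coeff (m + 1) (X * d⁄dX S f - f) = m * coeff (m + 1) f := by
  rw [map_sub, coeff_succ_X_mul, coeff_derivative]
  ring

end Forms

section Gap

variable {R : Type*} [CommSemiring R] {a : ℕ → R} {s m : ℕ}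

theorem coeff_mul_mk_of_gap (h0 : a 0 = 1) (hgap : ∀ k, 0 < k → k < s → a k = 0) (hm : m < s)
    (g : R⟦X⟧) : coeff m (g * mk a) = coeff m g := by
  rw [coeff_mul, sum_eq_single (m, 0)]
  · rw [coeff_mk, h0, mul_one]
  · rintro ⟨i, j⟩ hij hne
    rw [HasAntidiagonal.mem_antidiagonal] at hij
    have hj : 0 < j := Nat.pos_of_ne_zero fun hj ↦ hne (by simp_all)
    rw [coeff_mk, hgap j hj (by omega), mul_zero]
  · simp

theorem coeff_mk_sq_of_gap (h0 : a 0 = 1) (hgap : ∀ k, 0 < k → k < s → a k = 0) (hs : 0 < s)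
    (hm : 0 < m) :
    coeff m (mk a ^ 2) = 2 * a m + ∑ k ∈ Icc s (m - s), a k * a (m - k) := by
  have hsupport : ∑ k ∈ Icc s (m - s), a k * a (m - k) = ∑ k ∈ Ico 1 m, a k * a (m - k) := by
    refine sum_subset (fun k hk ↦ ?_) fun k hk hk' ↦ ?_
    · simp only [mem_Icc, mem_Ico] at *
      omega
    · simp only [mem_Icc, mem_Ico] at *
      by_cases hks : k < s
      · rw [hgap k (by omega) hks, zero_mul]
      · rw [hgap (m - k) (by omega) (by omega), mul_zero]
  simp only [sq, coeff_mul, coeff_mk]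
  rw [Nat.sum_antidiagonal_eq_sum_range_succ (fun i j ↦ a i * a j), sum_range_succ,
    sum_range_eq_add_Ico _ hm, hsupport, Nat.sub_zero, Nat.sub_self, h0]
  ring

end Gap

/-- The defining properties of the coefficients `β n m` of `z ^ (2 ^ n - m)` in the expansions
`p_n (ψ z)` of the Faber polynomials of the Mandelbrot set, over any field of characteristic
other than two (where `1 / 2 = 0`). The index `m - 2 ^ (n + 1) + 1` is written
`m + 1 - 2 ^ (n + 1)`, which does not truncate for the `m` considered in `backward_rec`. -/
structure IsFaberFamily {K : Type*} [Field K] (β : ℕ → ℕ → K) : Prop where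
  apply_zero : ∀ n, β n 0 = 1
  eq_zero_of_le : ∀ n m, 1 ≤ m → m ≤ 2 ^ (n + 1) - 2 → β n m = 0
  backward_rec : ∀ n m, 2 ^ (n + 1) - 1 ≤ m →
    β n m = (1 / 2) * (β (n + 1) m
      - ∑ k ∈ Icc (2 ^ (n + 1) - 1) (m + 1 - 2 ^ (n + 1)), β n k * β n (m - k)
      - β 0 (m + 1 - 2 ^ (n + 1)))

namespace IsFaberFamily

variable {K : Type*} [Field K] {β : ℕ → ℕ → K}

theorem eq_zero_of_lt (hβ : IsFaberFamily β) (n m : ℕ) (hm : 0 < m) (hmn : m < 2 ^ (n + 1) - 1) :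
    β n m = 0 :=
  hβ.eq_zero_of_le n m hm (by omega)

variable [CharZero K]

theorem forward_rec (hβ : IsFaberFamily β) {n m : ℕ} (hm : 2 ^ (n + 1) - 1 ≤ m) :
    β (n + 1) m = 2 * β n m
      + ∑ k ∈ Icc (2 ^ (n + 1) - 1) (m - (2 ^ (n + 1) - 1)), β n k * β n (m - k)
      + β 0 (m - (2 ^ (n + 1) - 1)) := by
  have hpos := Nat.one_le_two_pow (n := n + 1)
  have hrec := hβ.backward_rec n m hm
  rw [show m + 1 - 2 ^ (n + 1) = m - (2 ^ (n + 1) - 1) by omega] at hrec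
  linear_combination -2 * hrec

theorem powerSeriesMk_succ (hβ : IsFaberFamily β) (n : ℕ) :
    PowerSeries.mk (β (n + 1))
      = PowerSeries.mk (β n) ^ 2 + X ^ (2 ^ (n + 1) - 1) * PowerSeries.mk (β 0) := by
  have hpos := Nat.one_le_two_pow (n := n)
  ext m
  rw [map_add, coeff_mk, coeff_X_pow_mul', coeff_mk]
  rcases m.eq_zero_or_pos with rfl | hm
  · rw [if_neg (by omega)]
    simp [hβ.apply_zero]
  rw [coeff_mk_sq_of_gap (hβ.apply_zero n) (hβ.eq_zero_of_lt n) (by omega) hm]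
  split_ifs with hmn
  · exact hβ.forward_rec hmn
  · rw [hβ.eq_zero_of_lt (n + 1) m hm (by omega), hβ.eq_zero_of_lt n m hm (by omega),
      Icc_eq_empty (by omega)]
    simp

theorem powerSeriesMk_mem_binaryForms (hβ : IsFaberFamily β) (n : ℕ) :
    PowerSeries.mk (β n) ∈ binaryForms (PowerSeries.mk (β 0)) (2 ^ n) := by
  induction n with
  | zero => exact self_mem_binaryForms_one _
  | succ n ih =>
    rw [hβ.powerSeriesMk_succ n]
    refine add_mem ?_ ?_
    · rw [sq, pow_succ, mul_two]
      exact mul_mem_binaryForms ih ih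
    · have hmem := mul_mem_binaryForms (X_pow_mem_binaryForms _ (2 ^ (n + 1) - 1))
        (self_mem_binaryForms_one (PowerSeries.mk (β 0)))
      rwa [Nat.sub_add_cancel Nat.one_le_two_pow] at hmem

/-- Jungreis's theorem `b_{2 ^ n} = 0`, as `b_m = β 0 (m + 1)`. -/
theorem apply_zero_two_pow_add_one (hβ : IsFaberFamily β) {n : ℕ} (hn : 2 ≤ n) :
    β 0 (2 ^ n + 1) = 0 := by
  have hfour : 2 ^ 2 ≤ 2 ^ n := Nat.pow_le_pow_right two_pos hn
  have hres := coeff_X_mul_derivative_sub_self_mul_of_mem_binaryForms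
    (hβ.powerSeriesMk_mem_binaryForms n)
  rw [coeff_mul_mk_of_gap (hβ.apply_zero n) (hβ.eq_zero_of_lt n) (by omega),
    coeff_X_mul_derivative_sub_self, coeff_mk] at hres
  exact (mul_eq_zero.mp hres).resolve_left (by simp)

theorem apply_gap_add (hβ : IsFaberFamily β) {n j : ℕ} (hj : j < 2 ^ (n + 1) - 1) :
    β n (2 ^ (n + 1) - 1 + j) = -β 0 j / 2 := by
  have hrec := hβ.forward_rec (n := n) (Nat.le_add_right _ j)
  rw [hβ.eq_zero_of_lt (n + 1) _ (by omega) (by omega), Nat.add_sub_cancel_left,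
    Icc_eq_empty (by omega), sum_empty] at hrec
  linear_combination -hrec / 2

theorem apply_two_pow_sub_one (hβ : IsFaberFamily β) (n : ℕ) :
    β n (2 ^ (n + 1) - 1) = -1 / 2 := by
  have hpos := Nat.one_le_two_pow (n := n)
  simpa [hβ.apply_zero] using hβ.apply_gap_add (n := n) (j := 0) (by omega)

theorem apply_zero_one (hβ : IsFaberFamily β) : β 0 1 = -1 / 2 :=
  hβ.apply_two_pow_sub_one 0

theorem apply_zero_two (hβ : IsFaberFamily β) : β 0 2 = 1 / 8 := by
  have hrec := hβ.forward_rec (n := 0) (m := 2) (by norm_num)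
  norm_num [hβ.eq_zero_of_lt 1 2, hβ.apply_zero_one] at hrec
  linear_combination -hrec / 2

variable {n : ℕ}

theorem apply_two_pow (hβ : IsFaberFamily β) (hn : 0 < n) : β n (2 ^ (n + 1)) = 1 / 4 := by
  have htwo : 2 ^ 1 ≤ 2 ^ n := Nat.pow_le_pow_right two_pos hn
  have hval := hβ.apply_gap_add (n := n) (j := 1) (by omega)
  rw [Nat.sub_add_cancel Nat.one_le_two_pow, hβ.apply_zero_one] at hval
  linear_combination hval

theorem apply_two_pow_add_one (hβ : IsFaberFamily β) (hn : 0 < n) :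
    β n (2 ^ (n + 1) + 1) = -1 / 16 := by
  have htwo : 2 ^ 1 ≤ 2 ^ n := Nat.pow_le_pow_right two_pos hn
  have hval := hβ.apply_gap_add (n := n) (j := 2) (by omega)
  rw [show 2 ^ (n + 1) - 1 + 2 = 2 ^ (n + 1) + 1 by omega, hβ.apply_zero_two] at hval
  linear_combination hval

theorem sum_convolution_two_pow (hβ : IsFaberFamily β) (hn : 0 < n) :
    ∑ k ∈ Icc (2 ^ (n + 1) - 1) (2 ^ (n + 1) + 1), β n k * β n (2 ^ (n + 2) - k) = 1 / 8 := by
  have hleft := hβ.apply_two_pow_sub_one n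
  have hmid := hβ.apply_two_pow hn
  have hright := hβ.apply_two_pow_add_one hn
  obtain ⟨s, hs⟩ := Nat.exists_eq_add_of_le' (Nat.one_le_two_pow (n := n + 1))
  rw [hs] at hleft hmid hright
  rw [Nat.add_sub_cancel] at hleft
  rw [pow_succ 2 (n + 1), hs, Nat.add_sub_cancel, sum_Icc_succ_top (by omega),
    sum_Icc_succ_top (by omega), Icc_self, sum_singleton,
    show (s + 1) * 2 - s = s + 1 + 1 by omega, show (s + 1) * 2 - (s + 1) = s + 1 by omega,
    show (s + 1) * 2 - (s + 1 + 1) = s by omega, hleft, hmid, hright]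
  norm_num

end IsFaberFamily

theorem beta_special_three_general {K : Type*} [Field K] [CharZero K] {β : ℕ → ℕ → K}
    (hβ : IsFaberFamily β) {n : ℕ} (hn : 0 < n) : β n (2 ^ (n + 2)) = 1 / 16 := by
  have hdouble : 2 ^ (n + 2) = 2 ^ (n + 1) * 2 := pow_succ 2 (n + 1)
  have hpos := Nat.one_le_two_pow (n := n + 1)
  have hindex : 2 ^ (n + 2) - (2 ^ (n + 1) - 1) = 2 ^ (n + 1) + 1 := by omega
  have hrec := hβ.forward_rec (n := n) (m := 2 ^ (n + 2)) (by omega)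
  rw [hindex, hβ.sum_convolution_two_pow hn, hβ.apply_zero_two_pow_add_one (by omega),
    hβ.apply_two_pow n.succ_pos] at hrec
  linear_combination -hrec / 2

open Finset in
/-- For `β` satisfying the Ewing–Schober backward recursion and every positive
integer `n`, `β(n, 2^(n+2)) = 1/16`. -/
theorem beta_special_three (β : ℕ → ℕ → ℚ)
    (hβ0 : ∀ n, β n 0 = 1)
    (hβzero : ∀ n m, 1 ≤ m → m ≤ 2 ^ (n + 1) - 2 → β n m = 0)
    (hβrec : ∀ n m, 2 ^ (n + 1) - 1 ≤ m →
      β n m = (1 / 2) * (β (n + 1) m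
        - ∑ k ∈ Icc (2 ^ (n + 1) - 1) (m + 1 - 2 ^ (n + 1)), β n k * β n (m - k)
        - β 0 (m + 1 - 2 ^ (n + 1)))) (n : ℕ) (hn : 0 < n) :
    β n (2 ^ (n + 2)) = 1 / 16 := by
  exact beta_special_three_general ⟨hβ0, hβzero, hβrec⟩ hn
end

section
/- For every integer n ≥ 2, β(n, 2^{n+2} + 2) = −(1/2)·β(0, 2^{n+1} + 3). -/
/-!
Write `N = 2 ^ (n + 1)` and `a j = β 0 j`. For `j ≤ N - 2` the recursion at `m = N - 1 + j` has an
empty sum and a vanishing `β (n + 1) m`, so `β n (N - 1 + j) = -a j / 2`. For the next block of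
indices, `m = 2 * N - 1 + s` with `s ≤ N - 3`, this formula evaluates every term of the recursion
other than `a (N + s)`, and the sum becomes a quarter of the self-convolution of `a` at `s + 1`. By
the recursion at level `0` that convolution is `β 1 (s + 1) - a s`. Hence
`β n (2 * N - 1 + s) = -a (N + s) / 2 - (β 1 (s + 1) + a s) / 8`, and the theorem is the case
`s = 3`, where the correction `β 1 4 + a 3 = 1 / 4 - 1 / 4` vanishes.
-/

section

open Finset

/-- The Ewing–Schober backward recursion for the coefficients `β n m` of `z ^ (2 ^ n - m)` in the
Faber expansions `p_n (ψ z)` of the Mandelbrot set, over an arbitrary field. The subtractions on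
indices are those of `ℕ`; the interval of summation is empty for `m < 2 ^ (n + 2) - 2`. -/
structure IsFaberCoeff_s17 {K : Type*} [Field K] (β : ℕ → ℕ → K) : Prop where
  apply_zero_right : ∀ n, β n 0 = 1
  eq_zero : ∀ n m, 1 ≤ m → m ≤ 2 ^ (n + 1) - 2 → β n m = 0
  recursion : ∀ n m, 2 ^ (n + 1) - 1 ≤ m →
    β n m = (1 / 2) * (β (n + 1) m
      - ∑ k ∈ Icc (2 ^ (n + 1) - 1) (m + 1 - 2 ^ (n + 1)), β n k * β n (m - k)
      - β 0 (m + 1 - 2 ^ (n + 1)))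

theorem sum_Icc_eq_sum_antidiagonal {M : Type*} [AddCommMonoid M] (f : ℕ → ℕ → M) (a r : ℕ) :
    ∑ k ∈ Icc a (a + r), f k (2 * a + r - k) =
      ∑ p ∈ antidiagonal r, f (a + p.1) (a + p.2) := by
  rw [Nat.sum_antidiagonal_eq_sum_range_succ (fun i j ↦ f (a + i) (a + j)),
    ← Ico_add_one_right_eq_Icc, sum_Ico_eq_sum_range, show a + r + 1 - a = r + 1 by omega]
  refine sum_congr rfl fun i hi ↦ ?_
  rw [show 2 * a + r - (a + i) = a + (r - i) by grind]

theorem sum_antidiagonal_eq_add_sum_Ico {M : Type*} [AddCommMonoid M] (f : ℕ → ℕ → M)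
    {m : ℕ} (hm : 1 ≤ m) :
    ∑ p ∈ antidiagonal m, f p.1 p.2 = f 0 m + ∑ k ∈ Ico 1 m, f k (m - k) + f m 0 := by
  rw [Nat.sum_antidiagonal_eq_sum_range_succ f, sum_range_succ, range_eq_Ico,
    sum_eq_sum_Ico_succ_bot hm, Nat.sub_zero, Nat.sub_self, zero_add]

namespace IsFaberCoeff_s17

variable {K : Type*} [Field K] {β : ℕ → ℕ → K}

theorem sum_Ico_mul_eq_sum_Icc (hβ : IsFaberCoeff_s17 β) (n m : ℕ) :
    ∑ k ∈ Ico 1 m, β n k * β n (m - k) =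
      ∑ k ∈ Icc (2 ^ (n + 1) - 1) (m + 1 - 2 ^ (n + 1)), β n k * β n (m - k) := by
  have two_le_pow : 2 ≤ 2 ^ (n + 1) := Nat.le_self_pow (by omega) 2
  refine (sum_subset (fun k hk ↦ ?_) fun k hk hk' ↦ ?_).symm
  · simp only [mem_Icc, mem_Ico] at hk ⊢
    omega
  · simp only [mem_Icc, mem_Ico] at hk hk'
    rcases le_or_gt k (2 ^ (n + 1) - 2) with low | high
    · rw [hβ.eq_zero n k hk.1 low, zero_mul]
    · rw [hβ.eq_zero n (m - k) (by omega) (by omega), mul_zero]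

/-- The identity `p_{n+1} = p_n ^ 2 + c` between Faber polynomials, at the level of coefficients. -/
theorem apply_succ [NeZero (2 : K)] (hβ : IsFaberCoeff_s17 β) {n m : ℕ} (hm : 2 ^ (n + 1) - 1 ≤ m) :
    β (n + 1) m =
      ∑ p ∈ antidiagonal m, β n p.1 * β n p.2 + β 0 (m + 1 - 2 ^ (n + 1)) := by
  have two_le_pow : 2 ≤ 2 ^ (n + 1) := Nat.le_self_pow (by omega) 2
  have recursion := hβ.recursion n m hm
  rw [sum_antidiagonal_eq_add_sum_Ico (fun i j ↦ β n i * β n j) (by omega),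
    hβ.sum_Ico_mul_eq_sum_Icc, hβ.apply_zero_right]
  field_simp at recursion
  linear_combination -recursion

theorem apply_first_block (hβ : IsFaberCoeff_s17 β) {n j : ℕ} (hj : j + 2 ≤ 2 ^ (n + 1)) :
    β n (2 ^ (n + 1) - 1 + j) = -(1 / 2) * β 0 j := by
  rw [hβ.recursion n _ (by omega), show 2 ^ (n + 1) - 1 + j + 1 - 2 ^ (n + 1) = j by omega,
    Icc_eq_empty (by omega), sum_empty, hβ.eq_zero (n + 1) _ (by omega) (by omega)]
  ring

theorem sum_Icc_mul_first_block (hβ : IsFaberCoeff_s17 β) {n r : ℕ} (hr : r + 2 ≤ 2 ^ (n + 1)) :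
    ∑ k ∈ Icc (2 ^ (n + 1) - 1) (2 ^ (n + 1) - 1 + r),
        β n k * β n (2 * (2 ^ (n + 1) - 1) + r - k) =
      (1 / 2) ^ 2 * ∑ p ∈ antidiagonal r, β 0 p.1 * β 0 p.2 := by
  rw [sum_Icc_eq_sum_antidiagonal (fun i j ↦ β n i * β n j), mul_sum]
  refine sum_congr rfl fun p hp ↦ ?_
  have hp : p.1 + p.2 = r := mem_antidiagonal.mp hp
  rw [hβ.apply_first_block (by omega), hβ.apply_first_block (by omega)]
  ring

theorem apply_second_block [NeZero (2 : K)] (hβ : IsFaberCoeff_s17 β) {n s : ℕ}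
    (hs : s + 3 ≤ 2 ^ (n + 1)) :
    β n (2 ^ (n + 2) - 1 + s) =
      -(1 / 2) * β 0 (2 ^ (n + 1) + s) - (1 / 2) ^ 3 * (β 1 (s + 1) + β 0 s) := by
  have pow_double : 2 ^ (n + 2) = 2 * 2 ^ (n + 1) := pow_succ' 2 (n + 1)
  have next_level : β (n + 1) (2 ^ (n + 2) - 1 + s) = -(1 / 2) * β 0 s :=
    hβ.apply_first_block (by omega)
  have convolution : β 1 (s + 1) =
      ∑ p ∈ antidiagonal (s + 1), β 0 p.1 * β 0 p.2 + β 0 s :=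
    hβ.apply_succ (by omega)
  have middle_sum := hβ.sum_Icc_mul_first_block (n := n) (r := s + 1) (by omega)
  rw [show 2 * (2 ^ (n + 1) - 1) + (s + 1) = 2 ^ (n + 2) - 1 + s by omega] at middle_sum
  rw [hβ.recursion n _ (by omega), next_level,
    show 2 ^ (n + 2) - 1 + s + 1 - 2 ^ (n + 1) = 2 ^ (n + 1) + s by omega,
    show 2 ^ (n + 1) + s = 2 ^ (n + 1) - 1 + (s + 1) by omega, middle_sum, convolution]
  field_simp
  ring

theorem apply_zero_one (hβ : IsFaberCoeff_s17 β) : β 0 1 = -(1 / 2) := by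
  simpa [hβ.apply_zero_right] using hβ.apply_first_block (n := 0) (j := 0) (by norm_num)

theorem apply_one_three (hβ : IsFaberCoeff_s17 β) : β 1 3 = -(1 / 2) := by
  simpa [hβ.apply_zero_right] using hβ.apply_first_block (n := 1) (j := 0) (by norm_num)

theorem apply_one_four (hβ : IsFaberCoeff_s17 β) : β 1 4 = (1 / 2) ^ 2 := by
  have h : β 1 4 = -(1 / 2) * β 0 1 := hβ.apply_first_block (n := 1) (j := 1) (by norm_num)
  rw [h, hβ.apply_zero_one]
  ring

/-- The value of `β 0 2` is irrelevant: its coefficient is `2 * β 0 1 + 1 = 0`. -/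
theorem apply_zero_three [NeZero (2 : K)] (hβ : IsFaberCoeff_s17 β) : β 0 3 = -(1 / 2) ^ 2 := by
  have square : β 1 3 = ∑ p ∈ antidiagonal 3, β 0 p.1 * β 0 p.2 + β 0 2 :=
    hβ.apply_succ (n := 0) (by norm_num)
  simp only [Nat.sum_antidiagonal_succ, Nat.antidiagonal_zero, sum_singleton, hβ.apply_zero_right,
    hβ.apply_zero_one, hβ.apply_one_three] at square
  field_simp at square ⊢
  linear_combination -square

end IsFaberCoeff_s17

theorem beta_special_four_general {K : Type*} [Field K] [NeZero (2 : K)] {β : ℕ → ℕ → K}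
    (hβ : IsFaberCoeff_s17 β) {n : ℕ} (hn : 2 ≤ n) :
    β n (2 ^ (n + 2) + 2) = -(1 / 2) * β 0 (2 ^ (n + 1) + 3) := by
  have eight_le_pow : 2 ^ 3 ≤ 2 ^ (n + 1) := Nat.pow_le_pow_right two_pos (by omega)
  have one_le_pow : 1 ≤ 2 ^ (n + 2) := Nat.one_le_two_pow
  rw [show 2 ^ (n + 2) + 2 = 2 ^ (n + 2) - 1 + 3 by omega, hβ.apply_second_block (by omega),
    hβ.apply_one_four, hβ.apply_zero_three]
  ring

end

open Finset in
/-- For `β` satisfying the Ewing–Schober backward recursion and every `n ≥ 2`,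
`β(n, 2^(n+2) + 2) = -(1/2)·β(0, 2^(n+1) + 3)`. -/
theorem beta_special_four (β : ℕ → ℕ → ℚ)
    (hβ0 : ∀ n, β n 0 = 1)
    (hβzero : ∀ n m, 1 ≤ m → m ≤ 2 ^ (n + 1) - 2 → β n m = 0)
    (hβrec : ∀ n m, 2 ^ (n + 1) - 1 ≤ m →
      β n m = (1 / 2) * (β (n + 1) m
        - ∑ k ∈ Icc (2 ^ (n + 1) - 1) (m + 1 - 2 ^ (n + 1)), β n k * β n (m - k)
        - β 0 (m + 1 - 2 ^ (n + 1)))) (n : ℕ) (hn : 2 ≤ n) :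
    β n (2 ^ (n + 2) + 2) = -(1 / 2) * β 0 (2 ^ (n + 1) + 3) :=
  beta_special_four_general ⟨hβ0, hβzero, hβrec⟩ hn
end

section
/- For every integer n ≥ 3, β(n, 2^{n+2} + 6) = −(1/2)·β(0, 2^{n+1} + 7). -/
/-!
Put `d = 2 ^ (n + 1) - 1`. In terms of power series, the recursion says that
`Bₙ = ∑ₘ β(n, m) zᵐ` satisfies `Bₙ₊₁ = Bₙ² + zᵈ B₀` with `Bₙ = 1 + O(zᵈ)`, which is
`pₙ₊₁ = pₙ² + c` read at infinity. Hence `Bₙ = 1 - zᵈ B₀ / 2 + O(z²ᵈ)`. Substituting this into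
the square, using the same expansion of `Bₙ₊₁`, and replacing `B₀²` by `B₁ - z B₀` gives, for
`0 < r < d`,
`β(n, 2d + r) = -β(0, d + r) / 2 - (β(1, r) + β(0, r - 1)) / 8`.
For `r = 8` the last term vanishes: `β(1, 8) = 1/16 = -β(0, 7)`. Since `2 β(0, 1) = -1`, the
coefficients `β(0, 2), β(0, 4), β(0, 6)` cancel from the computation of these two values.
-/

open Finset

/-- The least positive index at which the coefficients `β n` of the `n`-th Faber polynomial are not
forced to vanish. -/
def faberGap (n : ℕ) : ℕ := 2 ^ (n + 1) - 1

/-- The Ewing–Schober backward recursion, with its initial conditions, for the coefficients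
`β n m` of `z ^ (2 ^ n - m)` in `pₙ (ψ z)`, where `ψ` uniformizes the exterior of the Mandelbrot
set. The values lie in an arbitrary field; identities for them are stated multiplied by powers
of two, since `ring` does not cancel numerals outside characteristic zero. -/
structure IsFaberCoeff_s19 {K : Type*} [Field K] (β : ℕ → ℕ → K) : Prop where
  apply_zero_right : ∀ n, β n 0 = 1
  apply_eq_zero : ∀ n m, 1 ≤ m → m ≤ 2 ^ (n + 1) - 2 → β n m = 0
  recursion : ∀ n m, 2 ^ (n + 1) - 1 ≤ m →
    β n m = (1 / 2) * (β (n + 1) m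
      - ∑ k ∈ Icc (2 ^ (n + 1) - 1) (m + 1 - 2 ^ (n + 1)), β n k * β n (m - k)
      - β 0 (m + 1 - 2 ^ (n + 1)))

theorem faberGap_add_one (n : ℕ) : faberGap n + 1 = 2 ^ (n + 1) :=
  Nat.sub_add_cancel Nat.one_le_two_pow

theorem faberGap_succ (n : ℕ) : faberGap (n + 1) = 2 * faberGap n + 1 := by
  have := faberGap_add_one n
  have := faberGap_add_one (n + 1)
  have := pow_succ 2 (n + 1)
  lia

theorem sum_Icc_add_eq_sum_antidiagonal {M : Type*} [AddCommMonoid M] (f : ℕ → ℕ → M) (a r : ℕ) :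
    ∑ k ∈ Icc a (a + r), f k (a + (a + r) - k) =
      ∑ p ∈ antidiagonal r, f (a + p.1) (a + p.2) := by
  rw [Nat.sum_antidiagonal_eq_sum_range_succ (fun i j ↦ f (a + i) (a + j)),
    ← Ico_add_one_right_eq_Icc, sum_Ico_eq_sum_range, show a + r + 1 - a = r + 1 by lia]
  refine sum_congr rfl fun i hi ↦ ?_
  have hir : i ≤ r := mem_range_succ_iff.mp hi
  rw [show a + (a + r) - (a + i) = a + (r - i) by lia]

namespace IsFaberCoeff_s19

variable {K : Type*} [Field K] {β : ℕ → ℕ → K}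

theorem apply_eq_zero_of_lt_faberGap (hβ : IsFaberCoeff_s19 β) {n m : ℕ} (hm : 0 < m)
    (hmn : m < faberGap n) : β n m = 0 := by
  have := faberGap_add_one n
  exact hβ.apply_eq_zero n m hm (by lia)

variable [NeZero (2 : K)]

theorem two_mul_apply_faberGap_add (hβ : IsFaberCoeff_s19 β) (n j : ℕ) :
    2 * β n (faberGap n + j) = β (n + 1) (faberGap n + j)
      - ∑ k ∈ Icc (faberGap n) j, β n k * β n (faberGap n + j - k) - β 0 j := by
  have hgap := faberGap_add_one n
  have hrec := hβ.recursion n (faberGap n + j) (by lia)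
  rw [show faberGap n + j + 1 - 2 ^ (n + 1) = j by lia] at hrec
  rw [hrec, ← mul_assoc, mul_one_div_cancel two_ne_zero, one_mul, faberGap]

theorem two_mul_apply_faberGap_add_of_lt (hβ : IsFaberCoeff_s19 β) {n j : ℕ} (hj : j < faberGap n) :
    2 * β n (faberGap n + j) = -β 0 j := by
  have hnext : β (n + 1) (faberGap n + j) = 0 :=
    hβ.apply_eq_zero_of_lt_faberGap (by lia) (by rw [faberGap_succ]; lia)
  rw [hβ.two_mul_apply_faberGap_add, hnext, Icc_eq_empty (by lia), sum_empty]
  ring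

theorem two_mul_apply_two_mul_faberGap_add (hβ : IsFaberCoeff_s19 β) (n r : ℕ) :
    2 * β n (2 * faberGap n + r) = β (n + 1) (2 * faberGap n + r)
      - ∑ p ∈ antidiagonal r, β n (faberGap n + p.1) * β n (faberGap n + p.2)
      - β 0 (faberGap n + r) := by
  rw [two_mul (faberGap n), add_assoc, hβ.two_mul_apply_faberGap_add,
    sum_Icc_add_eq_sum_antidiagonal fun i j ↦ β n i * β n j]

theorem two_mul_apply_zero_one (hβ : IsFaberCoeff_s19 β) : 2 * β 0 1 = -1 := by
  rw [← hβ.apply_zero_right 0]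
  exact hβ.two_mul_apply_faberGap_add_of_lt (n := 0) (j := 0) one_pos

theorem sum_antidiagonal_apply_zero_mul (hβ : IsFaberCoeff_s19 β) (m : ℕ) :
    ∑ p ∈ antidiagonal (m + 1), β 0 p.1 * β 0 p.2 = β 1 (m + 1) - β 0 m := by
  cases m with
  | zero =>
    have h11 : β 1 1 = 0 := hβ.apply_eq_zero_of_lt_faberGap one_pos (by decide)
    simp only [Nat.sum_antidiagonal_succ, Nat.antidiagonal_zero, sum_singleton, zero_add,
      hβ.apply_zero_right, h11]
    linear_combination hβ.two_mul_apply_zero_one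
  | succ r =>
    have hrec := hβ.two_mul_apply_two_mul_faberGap_add 0 r
    simp only [show faberGap 0 = 1 from rfl, mul_one, add_comm _ r, add_comm 1, zero_add] at hrec
    rw [Nat.sum_antidiagonal_succ, Nat.sum_antidiagonal_succ', hβ.apply_zero_right]
    linear_combination hrec

theorem eight_mul_apply_two_mul_faberGap_add_of_lt (hβ : IsFaberCoeff_s19 β) {n s : ℕ}
    (hs : s + 1 < faberGap n) :
    8 * β n (2 * faberGap n + (s + 1)) =
      -4 * β 0 (faberGap n + (s + 1)) - (β 1 (s + 1) + β 0 s) := by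
  have hnext : 2 * β (n + 1) (2 * faberGap n + (s + 1)) = -β 0 s := by
    have hgap := faberGap_succ n
    rw [show 2 * faberGap n + (s + 1) = faberGap (n + 1) + s by lia]
    exact hβ.two_mul_apply_faberGap_add_of_lt (by lia)
  have hsum : 4 * ∑ p ∈ antidiagonal (s + 1), β n (faberGap n + p.1) * β n (faberGap n + p.2) =
      β 1 (s + 1) - β 0 s := by
    rw [← hβ.sum_antidiagonal_apply_zero_mul, mul_sum]
    refine sum_congr rfl fun p hp ↦ ?_
    have hp : p.1 + p.2 = s + 1 := mem_antidiagonal.mp hp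
    have hfst := hβ.two_mul_apply_faberGap_add_of_lt (n := n) (j := p.1) (by lia)
    have hsnd := hβ.two_mul_apply_faberGap_add_of_lt (n := n) (j := p.2) (by lia)
    linear_combination 2 * β n (faberGap n + p.2) * hfst - β 0 p.1 * hsnd
  linear_combination 4 * hβ.two_mul_apply_two_mul_faberGap_add n (s + 1) + 2 * hnext - hsum

theorem four_mul_apply_zero_three (hβ : IsFaberCoeff_s19 β) : 4 * β 0 3 = -1 := by
  have hconv := hβ.sum_antidiagonal_apply_zero_mul 2
  have h13 : 2 * β 1 3 = -β 0 0 :=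
    hβ.two_mul_apply_faberGap_add_of_lt (n := 1) (j := 0) (by decide)
  simp only [Nat.sum_antidiagonal_eq_sum_range_succ_mk, sum_range_succ, sum_range_zero,
    hβ.apply_zero_right] at hconv h13
  linear_combination 2 * hconv + h13 - 2 * β 0 2 * hβ.two_mul_apply_zero_one

theorem apply_zero_five (hβ : IsFaberCoeff_s19 β) : β 0 5 = 0 := by
  have hconv := hβ.sum_antidiagonal_apply_zero_mul 4
  have h15 : 2 * β 1 5 = -β 0 2 :=
    hβ.two_mul_apply_faberGap_add_of_lt (n := 1) (j := 2) (by decide)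
  simp only [Nat.sum_antidiagonal_eq_sum_range_succ_mk, sum_range_succ, sum_range_zero,
    hβ.apply_zero_right] at hconv
  have hfour : 2 * (2 * β 0 5) = 0 := by
    linear_combination 2 * hconv + h15 - 2 * β 0 4 * hβ.two_mul_apply_zero_one
      - β 0 2 * hβ.four_mul_apply_zero_three
  simpa [two_ne_zero] using hfour

theorem sixteen_mul_apply_zero_seven (hβ : IsFaberCoeff_s19 β) : 16 * β 0 7 = -1 := by
  have hconv := hβ.sum_antidiagonal_apply_zero_mul 6
  have h17 : 8 * β 1 7 = -4 * β 0 4 - (β 1 1 + β 0 0) :=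
    hβ.eight_mul_apply_two_mul_faberGap_add_of_lt (n := 1) (s := 0) (by decide)
  have h11 : β 1 1 = 0 := hβ.apply_eq_zero_of_lt_faberGap one_pos (by decide)
  simp only [Nat.sum_antidiagonal_eq_sum_range_succ_mk, sum_range_succ, sum_range_zero,
    hβ.apply_zero_right] at hconv h17
  linear_combination 8 * hconv + h17 - h11 - 8 * β 0 6 * hβ.two_mul_apply_zero_one
    - 4 * β 0 4 * hβ.four_mul_apply_zero_three - 16 * β 0 2 * hβ.apply_zero_five

theorem sixteen_mul_apply_one_eight (hβ : IsFaberCoeff_s19 β) : 16 * β 1 8 = 1 := by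
  have h18 : 8 * β 1 8 = -4 * β 0 5 - (β 1 2 + β 0 1) :=
    hβ.eight_mul_apply_two_mul_faberGap_add_of_lt (n := 1) (s := 1) (by decide)
  have h12 : β 1 2 = 0 := hβ.apply_eq_zero_of_lt_faberGap two_pos (by decide)
  linear_combination 2 * h18 - 8 * hβ.apply_zero_five - 2 * h12 - hβ.two_mul_apply_zero_one

theorem apply_one_eight_add_apply_zero_seven (hβ : IsFaberCoeff_s19 β) : β 1 8 + β 0 7 = 0 := by
  have hsixteen : 2 ^ 4 * (β 1 8 + β 0 7) = 0 := by
    linear_combination hβ.sixteen_mul_apply_one_eight + hβ.sixteen_mul_apply_zero_seven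
  exact (mul_eq_zero.mp hsixteen).resolve_left (pow_ne_zero 4 two_ne_zero)

end IsFaberCoeff_s19

theorem beta_special_six_general {K : Type*} [Field K] [NeZero (2 : K)] {β : ℕ → ℕ → K}
    (hβ : IsFaberCoeff_s19 β) {n : ℕ} (hn : 3 ≤ n) :
    β n (2 ^ (n + 2) + 6) = -(1 / 2) * β 0 (2 ^ (n + 1) + 7) := by
  have hpow : 2 ^ 4 ≤ 2 ^ (n + 1) := Nat.pow_le_pow_right two_pos (by lia)
  have hgap := faberGap_add_one n
  have hexp := hβ.eight_mul_apply_two_mul_faberGap_add_of_lt (n := n) (s := 7) (by lia)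
  rw [hβ.apply_one_eight_add_apply_zero_seven,
    show 2 * faberGap n + (7 + 1) = 2 ^ (n + 2) + 6 by rw [pow_succ 2 (n + 1)]; lia,
    show faberGap n + (7 + 1) = 2 ^ (n + 1) + 7 by lia] at hexp
  have htwo : (2 : K) ≠ 0 := two_ne_zero
  field_simp
  refine mul_left_cancel₀ (pow_ne_zero 2 htwo) ?_
  linear_combination hexp

open Finset in
/-- For `β` satisfying the Ewing–Schober backward recursion and every `n ≥ 3`,
`β(n, 2^(n+2) + 6) = -(1/2)·β(0, 2^(n+1) + 7)`. -/
theorem beta_special_six (β : ℕ → ℕ → ℚ)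
    (hβ0 : ∀ n, β n 0 = 1)
    (hβzero : ∀ n m, 1 ≤ m → m ≤ 2 ^ (n + 1) - 2 → β n m = 0)
    (hβrec : ∀ n m, 2 ^ (n + 1) - 1 ≤ m →
      β n m = (1 / 2) * (β (n + 1) m
        - ∑ k ∈ Icc (2 ^ (n + 1) - 1) (m + 1 - 2 ^ (n + 1)), β n k * β n (m - k)
        - β 0 (m + 1 - 2 ^ (n + 1)))) (n : ℕ) (hn : 3 ≤ n) :
    β n (2 ^ (n + 2) + 6) = -(1 / 2) * β 0 (2 ^ (n + 1) + 7) :=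
  beta_special_six_general ⟨hβ0, hβzero, hβrec⟩ hn
end
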